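/- arXiv:2006.06135 — 2 statements merged into one kernel-verified Lean document; each statement's English description precedes it below -/
import Mathlib

section
/- Let S and A be finite nonempty sets and let Q* : S×A → ℝ satisfy Q*(s,a) = f(s)g(a) for some f : S → ℝ and g : A → ℝ, with 0 < V_min ≤ Q*(s,a) ≤ V_max for all (s,a) ∈ S×A. Fix anchor elements s# ∈ S and a# ∈ A, and let Ω = {(s,a) ∈ S×A : s = s# or a = a#}. Suppose Q̂ : S×A → ℝ satisfies max_{(s,a)∈Ω} |Q̂(s,a) − Q*(s,a)| ≤ ε for some ε ≤ V_min/2. Define Q̄(s,a) = Q̂(s,a#) Q̂(s#,a) / Q̂(s#,a#) for all (s,a) ∈ S×A. Then max_{(s,a)∈S×A} |Q̄(s,a) − Q*(s,a)| ≤ 7 (V_max/V_min) ε. -/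
/-!
As `Q*` has rank one, `Q* s a * Q* s♯ a♯ = Q* s a♯ * Q* s♯ a`. Replacing the three anchor entries
of this identity by their estimates, which are off by at most `ε`, makes its two sides differ by at
most `ε * (Q* s a♯ + Q* s♯ a + Q* s a + ε) ≤ ε * (7 / 2 * V_max)`. Dividing by the estimated pivot,
which is at least `V_min - ε ≥ V_min / 2`, gives the constant `7`.
-/

theorem abs_mul_sub_mul_le_of_mul_eq_mul {R : Type*} [CommRing R] [LinearOrder R] [IsOrderedRing R]
    {x y z q x' y' z' ε : R} (hx : 0 ≤ x) (hy : 0 ≤ y) (hq : 0 ≤ q) (h : x * y = q * z)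
    (hx' : |x' - x| ≤ ε) (hy' : |y' - y| ≤ ε) (hz' : |z' - z| ≤ ε) :
    |x' * y' - q * z'| ≤ ε * (x + y + q + ε) := by
  have hε : 0 ≤ ε := (abs_nonneg _).trans hx'
  have hsplit : x' * y' - q * z' =
      x * (y' - y) + y * (x' - x) + (x' - x) * (y' - y) - q * (z' - z) := by
    linear_combination h
  calc |x' * y' - q * z'|
      ≤ |x * (y' - y)| + |y * (x' - x)| + |(x' - x) * (y' - y)| + |q * (z' - z)| := by
        rw [hsplit]
        exact (abs_sub _ _).trans (by gcongr; exact abs_add_three _ _ _)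
    _ = x * |y' - y| + y * |x' - x| + |x' - x| * |y' - y| + q * |z' - z| := by
        simp only [abs_mul, abs_of_nonneg hx, abs_of_nonneg hy, abs_of_nonneg hq]
    _ ≤ x * ε + y * ε + ε * ε + q * ε := by gcongr
    _ = ε * (x + y + q + ε) := by ring

section LinearOrderedField

variable {K : Type*} [Field K] [LinearOrder K] [IsStrictOrderedRing K]

theorem abs_mul_div_sub_le_of_mul_eq_mul {x y z q x' y' z' ε : K} (hx : 0 ≤ x) (hy : 0 ≤ y)
    (hq : 0 ≤ q) (h : x * y = q * z) (hx' : |x' - x| ≤ ε) (hy' : |y' - y| ≤ ε)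
    (hz' : |z' - z| ≤ ε) (hz'_pos : 0 < z') :
    |x' * y' / z' - q| ≤ ε * (x + y + q + ε) / z' := by
  rw [div_sub' hz'_pos.ne', abs_div, abs_of_pos hz'_pos, mul_comm z']
  gcongr
  exact abs_mul_sub_mul_le_of_mul_eq_mul hx hy hq h hx' hy' hz'

theorem stmt10_general {S A : Type*} (Qstar : S → A → K) (f : S → K) (g : A → K)
    (hprod : ∀ s a, Qstar s a = f s * g a)
    (V_min V_max : K) (hV_min : 0 < V_min)
    (hbdd : ∀ s a, V_min ≤ Qstar s a ∧ Qstar s a ≤ V_max)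
    (ssharp : S) (asharp : A)
    (Qhat : S → A → K) (ε : K) (hε : ε ≤ V_min / 2)
    (hnoise : ∀ s a, (s = ssharp ∨ a = asharp) → |Qhat s a - Qstar s a| ≤ ε)
    (Qbar : S → A → K)
    (hQbar : ∀ s a, Qbar s a = Qhat s asharp * Qhat ssharp a / Qhat ssharp asharp) :
    ∀ s a, |Qbar s a - Qstar s a| ≤ 7 * (V_max / V_min) * ε := by
  intro s a
  have hpos (s : S) (a : A) : 0 < Qstar s a := hV_min.trans_le (hbdd s a).1
  have hrank : Qstar s asharp * Qstar ssharp a = Qstar s a * Qstar ssharp asharp := by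
    simp only [hprod]
    ring
  have hnoise_pivot := hnoise ssharp asharp (.inl rfl)
  have hε_nonneg : 0 ≤ ε := (abs_nonneg _).trans hnoise_pivot
  have hpivot : V_min / 2 ≤ Qhat ssharp asharp := by
    linarith [(abs_le.mp hnoise_pivot).1, (hbdd ssharp asharp).1]
  have hsum : Qstar s asharp + Qstar ssharp a + Qstar s a + ε ≤ 7 / 2 * V_max := by
    linarith [(hbdd s asharp).2, (hbdd ssharp a).2, (hbdd s a).1, (hbdd s a).2]
  calc |Qbar s a - Qstar s a|
      ≤ ε * (Qstar s asharp + Qstar ssharp a + Qstar s a + ε) / Qhat ssharp asharp := by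
        rw [hQbar]
        exact abs_mul_div_sub_le_of_mul_eq_mul (hpos s asharp).le (hpos ssharp a).le (hpos s a).le
          hrank (hnoise s asharp (.inr rfl)) (hnoise ssharp a (.inl rfl)) hnoise_pivot
          ((half_pos hV_min).trans_le hpivot)
    _ ≤ ε * (7 / 2 * V_max) / (V_min / 2) := by
        have hV_max : 0 < V_max := (hpos s a).trans_le (hbdd s a).2
        gcongr
    _ = 7 * (V_max / V_min) * ε := by field_simp

end LinearOrderedField

/-- Entrywise guarantee for rank-1 matrix estimation with anchor row and column. -/
theorem stmt10 {S A : Type*} [Fintype S] [Fintype A] [Nonempty S] [Nonempty A]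
    (Qstar : S → A → ℝ) (f : S → ℝ) (g : A → ℝ)
    (hprod : ∀ s a, Qstar s a = f s * g a)
    (V_min V_max : ℝ) (hV_min : 0 < V_min)
    (hbdd : ∀ s a, V_min ≤ Qstar s a ∧ Qstar s a ≤ V_max)
    (ssharp : S) (asharp : A)
    (Qhat : S → A → ℝ) (ε : ℝ) (hε : ε ≤ V_min / 2)
    (hnoise : ∀ s a, (s = ssharp ∨ a = asharp) → |Qhat s a - Qstar s a| ≤ ε)
    (Qbar : S → A → ℝ)
    (hQbar : ∀ s a, Qbar s a = Qhat s asharp * Qhat ssharp a / Qhat ssharp asharp) :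
    ∀ s a, |Qbar s a - Qstar s a| ≤ 7 * (V_max / V_min) * ε :=
  stmt10_general Qstar f g hprod V_min V_max hV_min hbdd ssharp asharp Qhat ε hε hnoise Qbar hQbar
end

section
/- Let A be a real m×n matrix and B a real n×m matrix. Then |Tr(AB)| ≤ √(rank(B)) · ‖A‖_op · ‖B‖_F, where Tr denotes the trace, ‖A‖_op is the operator norm of A induced by Euclidean norms, and ‖B‖_F = (∑_{i,j} B_{ij}²)^{1/2} is the Frobenius norm. -/
open Matrix

/-- The operator norm of a real matrix, induced by the Euclidean norms. -/
noncomputable def matOpNorm {m n : ℕ} (M : Matrix (Fin m) (Fin n) ℝ) : ℝ :=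
  ‖LinearMap.toContinuousLinearMap (Matrix.toEuclideanLin M)‖

/-!
Write `B = ι ∘ B₀` with `B₀` the corestriction of `B` to its range `V` and `ι` the inclusion. By
cyclicity, `Tr (A B) = Tr (B₀ A|_V)` is a trace over the space `V` of dimension `rank B`. The
Cauchy–Schwarz inequality for the Hilbert–Schmidt inner product bounds it by the Hilbert–Schmidt
norms of `A|_V` and `B₀`. The former is at most `√(rank B) ‖A‖`, as `A` sends each of the `rank B`
vectors of an orthonormal basis of `V` to a vector of norm at most `‖A‖`; the latter is `‖B‖_F`.
-/

theorem sqrt_sum_sq_norm_apply_le {𝕜 E F ι : Type*} [NontriviallyNormedField 𝕜]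
    [SeminormedAddCommGroup E] [NormedSpace 𝕜 E] [SeminormedAddCommGroup F] [NormedSpace 𝕜 F]
    [Fintype ι] (T : E →L[𝕜] F) {v : ι → E} (hv : ∀ i, ‖v i‖ ≤ 1) :
    √(∑ i, ‖T (v i)‖ ^ 2) ≤ √(Fintype.card ι) * ‖T‖ := by
  have hsum : ∑ i, ‖T (v i)‖ ^ 2 ≤ Fintype.card ι * ‖T‖ ^ 2 := by
    rw [← nsmul_eq_mul]
    refine Finset.sum_le_card_nsmul _ _ _ fun i _ ↦ ?_
    gcongr
    exact T.unit_le_opNorm _ (hv i)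
  calc √(∑ i, ‖T (v i)‖ ^ 2)
      ≤ √(Fintype.card ι * ‖T‖ ^ 2) := Real.sqrt_le_sqrt hsum
    _ = √(Fintype.card ι) * ‖T‖ := by
        rw [Real.sqrt_mul (Nat.cast_nonneg _), Real.sqrt_sq (norm_nonneg _)]

section InnerProductSpace

open scoped InnerProductSpace

variable {𝕜 E F ι κ : Type*} [RCLike 𝕜]
  [NormedAddCommGroup E] [InnerProductSpace 𝕜 E] [NormedAddCommGroup F] [InnerProductSpace 𝕜 F]
  [Fintype ι] [Fintype κ]

theorem sum_sq_norm_adjoint_apply_eq [FiniteDimensional 𝕜 E] [FiniteDimensional 𝕜 F]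
    (S : E →ₗ[𝕜] F) (b : OrthonormalBasis ι 𝕜 E) (u : OrthonormalBasis κ 𝕜 F) :
    ∑ k, ‖S.adjoint (u k)‖ ^ 2 = ∑ i, ‖S (b i)‖ ^ 2 :=
  calc ∑ k, ‖S.adjoint (u k)‖ ^ 2
      = ∑ k, ∑ i, ‖⟪S.adjoint (u k), b i⟫_𝕜‖ ^ 2 := by simp only [b.sum_sq_norm_inner_left]
    _ = ∑ i, ∑ k, ‖⟪u k, S (b i)⟫_𝕜‖ ^ 2 := by
        simp only [LinearMap.adjoint_inner_left]
        exact Finset.sum_comm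
    _ = ∑ i, ‖S (b i)‖ ^ 2 := by simp only [u.sum_sq_norm_inner_right]

theorem norm_trace_comp_le_sqrt_sum_mul_sqrt_sum (S : E →ₗ[𝕜] F) (T : F →ₗ[𝕜] E)
    (b : OrthonormalBasis ι 𝕜 E) (u : OrthonormalBasis κ 𝕜 F) :
    ‖LinearMap.trace 𝕜 F (S ∘ₗ T)‖ ≤ √(∑ k, ‖T (u k)‖ ^ 2) * √(∑ i, ‖S (b i)‖ ^ 2) := by
  have : FiniteDimensional 𝕜 E := b.toBasis.finiteDimensional_of_finite
  have : FiniteDimensional 𝕜 F := u.toBasis.finiteDimensional_of_finite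
  calc ‖LinearMap.trace 𝕜 F (S ∘ₗ T)‖
      = ‖∑ k, ⟪S.adjoint (u k), T (u k)⟫_𝕜‖ := by
        simp only [LinearMap.trace_eq_sum_inner _ u, LinearMap.comp_apply,
          LinearMap.adjoint_inner_left]
    _ ≤ ∑ k, ‖T (u k)‖ * ‖S.adjoint (u k)‖ :=
        norm_sum_le_of_le _ fun k _ ↦ (norm_inner_le_norm _ _).trans_eq (mul_comm _ _)
    _ ≤ √(∑ k, ‖T (u k)‖ ^ 2) * √(∑ k, ‖S.adjoint (u k)‖ ^ 2) :=
        Real.sum_mul_le_sqrt_mul_sqrt _ _ _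
    _ = √(∑ k, ‖T (u k)‖ ^ 2) * √(∑ i, ‖S (b i)‖ ^ 2) := by
        rw [sum_sq_norm_adjoint_apply_eq S b u]

theorem norm_trace_comp_le_sqrt_finrank_range_mul (A : F →L[𝕜] E) (B : E →ₗ[𝕜] F)
    (b : OrthonormalBasis ι 𝕜 E) :
    ‖LinearMap.trace 𝕜 E (A ∘ₗ B)‖ ≤
      √(Module.finrank 𝕜 B.range) * ‖A‖ * √(∑ i, ‖B (b i)‖ ^ 2) := by
  have : FiniteDimensional 𝕜 E := b.toBasis.finiteDimensional_of_finite
  let u := stdOrthonormalBasis 𝕜 B.range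
  have hcyclic : LinearMap.trace 𝕜 E (A ∘ₗ B) =
      LinearMap.trace 𝕜 B.range (B.rangeRestrict ∘ₗ A ∘ₗ B.range.subtype) :=
    LinearMap.trace_comp_comm' B.rangeRestrict (A ∘ₗ B.range.subtype)
  have hA : √(∑ k, ‖A (u k)‖ ^ 2) ≤ √(Module.finrank 𝕜 B.range) * ‖A‖ := by
    simpa only [Fintype.card_fin] using
      sqrt_sum_sq_norm_apply_le A (v := fun k ↦ (u k : F)) fun k ↦ (u.norm_eq_one k).le
  rw [hcyclic]
  calc _ ≤ √(∑ k, ‖A (u k)‖ ^ 2) * √(∑ i, ‖B (b i)‖ ^ 2) :=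
        norm_trace_comp_le_sqrt_sum_mul_sqrt_sum B.rangeRestrict (A ∘ₗ B.range.subtype) b u
    _ ≤ _ := by gcongr

end InnerProductSpace

section Matrix

open scoped ENNReal Matrix.Norms.L2Operator

theorem trace_toLpLin {R n : Type*} [CommRing R] [Fintype n] [DecidableEq n] (p : ℝ≥0∞)
    (M : Matrix n n R) : LinearMap.trace R _ (toLpLin p p M) = M.trace := by
  rw [toLpLin_eq_toLin, trace_toLin_eq]

theorem finrank_range_toLpLin {R m n : Type*} [CommRing R] [Finite m] [Fintype n] [DecidableEq n]
    (p q : ℝ≥0∞) (M : Matrix m n R) : Module.finrank R (toLpLin p q M).range = M.rank := by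
  rw [toLpLin_eq_toLin, ← rank_eq_finrank_range_toLin]

variable {𝕜 m n : Type*} [RCLike 𝕜] [Fintype m] [Fintype n] [DecidableEq n]

theorem sum_sq_norm_toEuclideanLin_basisFun (M : Matrix m n 𝕜) :
    ∑ j, ‖toEuclideanLin M (EuclideanSpace.basisFun n 𝕜 j)‖ ^ 2 = ∑ i, ∑ j, ‖M i j‖ ^ 2 := by
  rw [Finset.sum_comm]
  simp [EuclideanSpace.norm_sq_eq]

theorem stmt14_general (A : Matrix m n 𝕜) (B : Matrix n m 𝕜) :
    ‖(A * B).trace‖ ≤ √B.rank * ‖A‖ * √(∑ i, ∑ j, ‖B i j‖ ^ 2) := by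
  classical
  rw [← trace_toLpLin 2, toLpLin_mul 2 2 2, ← finrank_range_toLpLin 2 2,
    ← sum_sq_norm_toEuclideanLin_basisFun, l2_opNorm_def]
  exact norm_trace_comp_le_sqrt_finrank_range_mul
    (LinearMap.toContinuousLinearMap (toEuclideanLin A)) _ _

end Matrix

/-- Trace inequality: `|Tr(AB)| ≤ √(rank B) ‖A‖_op ‖B‖_F`. -/
theorem stmt14 (m n : ℕ) (A : Matrix (Fin m) (Fin n) ℝ) (B : Matrix (Fin n) (Fin m) ℝ) :
    |(A * B).trace| ≤ Real.sqrt (B.rank : ℝ) * matOpNorm A *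
      Real.sqrt (∑ i, ∑ j, B i j ^ 2) := by
  simpa only [matOpNorm, l2_opNorm_def, LinearEquiv.trans_apply, Real.norm_eq_abs, sq_abs] using
    stmt14_general A B
end
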